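/- Let (u_n) be a sequence of information structures and u an information structure. Then val(u_n, g) → val(u, g) for every payoff function g ∈ 𝒢 (pointwise convergence of values) if and only if d(u_n, u) → 0 (uniform convergence of values over all payoff functions). -/

import Mathlib

open scoped BigOperators ENNReal

namespace ValueDistance

/-- An information structure: a probability distribution on `K × ℕ × ℕ`
(state, signal of player 1, signal of player 2). -/
abbrev InfoStruct (K : Type) := PMF (K × ℕ × ℕ)

/-- A behavior strategy / garbling : a map `ℕ → Δ(ℕ)`. -/
abbrev Garbling : Type := ℕ → PMF ℕ

variable {K : Type}

/-- `g` is a payoff function with action bound `L` : values in `[-1,1]`,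
`g k i j = -1` when `i ≥ L`, and `g k i j = 1` when `i < L` and `j ≥ L`. -/
def IsPayoffL (L : ℕ) (g : K → ℕ → ℕ → ℝ) : Prop :=
  (∀ k i j, g k i j ∈ Set.Icc (-1 : ℝ) 1) ∧
  (∀ k i j, L ≤ i → g k i j = -1) ∧
  (∀ k i j, i < L → L ≤ j → g k i j = 1)

/-- `g` belongs to the set `𝒢` of payoff functions. -/
def IsPayoff (g : K → ℕ → ℕ → ℝ) : Prop := ∃ L, IsPayoffL L g

/-- `g` belongs to the set `𝒢₁` of single-agent (player 1) problems. -/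
def IsPayoff1 (g : K → ℕ → ℕ → ℝ) : Prop :=
  IsPayoff g ∧ ∀ k i j j', g k i j = g k i j'

/-- Expected payoff in the Bayesian game `Γ(u,g)` when player 1 uses the behavior
strategy `σ` and player 2 uses `τ`. -/
noncomputable def payoff (u : InfoStruct K) (g : K → ℕ → ℕ → ℝ)
    (σ τ : Garbling) : ℝ :=
  ∑' (x : K × ℕ × ℕ) (i : ℕ) (j : ℕ),
    (u x).toReal * (σ x.2.1 i).toReal * (τ x.2.2 j).toReal * g x.1 i j

/-- The value `val(u,g)` of the zero-sum Bayesian game `Γ(u,g)`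
(the common value of `sup inf` and `inf sup` of the expected payoff;
we take `sup inf` as the definition). -/
noncomputable def val (u : InfoStruct K) (g : K → ℕ → ℕ → ℝ) : ℝ :=
  ⨆ σ : Garbling, ⨅ τ : Garbling, payoff u g σ τ

/-- Total variation distance `‖u − v‖`. -/
noncomputable def tv {α : Type} (u v : PMF α) : ℝ :=
  ∑' x : α, |(u x).toReal - (v x).toReal|

/-- `q.u` : player 1's signal garbled through `q`. -/
noncomputable def garbleLeft (q : Garbling) (u : InfoStruct K) : InfoStruct K :=
  u.bind (fun x => (q x.2.1).map (fun c => (x.1, c, x.2.2)))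

/-- `u.q` : player 2's signal garbled through `q`. -/
noncomputable def garbleRight (u : InfoStruct K) (q : Garbling) : InfoStruct K :=
  u.bind (fun x => (q x.2.2).map (fun d => (x.1, x.2.1, d)))

/-- The value-based distance `d(u,v) = sup_{g ∈ 𝒢} |val(u,g) − val(v,g)|`. -/
noncomputable def dVal (u v : InfoStruct K) : ℝ :=
  ⨆ g : {g : K → ℕ → ℕ → ℝ // IsPayoff g}, |val u g.1 - val v g.1|

/-- The single-agent distance `d₁(u,v) = sup_{g ∈ 𝒢₁} |val(u,g) − val(v,g)|`. -/
noncomputable def d1 (u v : InfoStruct K) : ℝ :=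
  ⨆ g : {g : K → ℕ → ℕ → ℝ // IsPayoff1 g}, |val u g.1 - val v g.1|

/-- Marginal of an information structure on `K × ℕ` (state, player 1's signal). -/
noncomputable def marg1 (u : InfoStruct K) : PMF (K × ℕ) :=
  u.map (fun x => (x.1, x.2.1))

/-- Garbling of a single-agent information structure:
`(q.w)(k,c) = Σ_s w(k,s)·q(s)({c})`. -/
noncomputable def garble1 (q : Garbling) (w : PMF (K × ℕ)) : PMF (K × ℕ) :=
  w.bind (fun x => (q x.2).map (fun c => (x.1, c)))

/-- Marginal of an information structure on the states. -/
noncomputable def margK (u : InfoStruct K) : PMF K := u.map Prod.fst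

/-- Marginal of an information structure on `K × ℕ` (state, player 2's signal). -/
noncomputable def margKD (u : InfoStruct K) : PMF (K × ℕ) :=
  u.map (fun x => (x.1, x.2.2))

/-- `σ.q` : on signal `c`, draw `c'` according to `q(c)` and play `σ(c')`. -/
noncomputable def compGarble (σ q : Garbling) : Garbling :=
  fun c => (q c).bind σ

/-- `u ∈ 𝒰(L)` : both players' signals are `< L` with probability 1. -/
def InU (L : ℕ) (u : InfoStruct K) : Prop :=
  ∀ x : K × ℕ × ℕ, u x ≠ 0 → x.2.1 < L ∧ x.2.2 < L

/-- `q ∈ 𝒬(L)` : garbling with values supported on `{0,…,L−1}`. -/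
def GarblingIn (L : ℕ) (q : Garbling) : Prop :=
  ∀ n m, q n m ≠ 0 → m < L

/-- The two players' signals are conditionally independent given the state:
`u(k)·u(k,c,d) = u(k,c)·u(k,d)` for all `k, c, d`
(equivalently `u(c,d|k) = u(c|k)·u(d|k)` whenever `u(k) > 0`). -/
def CondIndep (u : InfoStruct K) : Prop :=
  ∀ (k : K) (c d : ℕ),
    (∑' y : ℕ × ℕ, u (k, y)) * u (k, c, d)
      = (∑' d' : ℕ, u (k, c, d')) * (∑' c' : ℕ, u (k, c', d))

end ValueDistance

namespace ValueDistance

/-!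
Fix a behavior strategy `σ` of player 1 in `Γ(u, g)`. Letting him announce a signal `c` and play
`σ(c)` turns `g` into a game `A` in which truth-telling guarantees what `σ` guarantees, while in
any other structure `v` an announcement strategy for `A` can be imitated in `Γ(v, g)`. All but `ε`
of the mass of `u` sits on finitely many pairs (state, signal of player 1). On these pairs the
columns of `A` are points of a compact cube, and rounding them to a finite `ε`-net leaves finitely
many test games, depending on `u` and `ε` but not on `g`. Hence if `val(v, ·)` is almost at least
`val(u, ·)` on those tests, it is so on all of `𝒢`. The reverse inequality is the same statement
with the players exchanged, because by the minimax theorem the value of the exchanged game is the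
opposite of the value.
-/

open Filter Topology

section Expectation

variable {α β : Type*} {f h : α → ℝ} {C D e : ℝ}

/-- The expectation of a real function under a probability mass function. Like the series that
defines it, it takes the junk value `0` where that series diverges, so the lemmas below assume
their integrands bounded. -/
noncomputable def expect (p : PMF α) (f : α → ℝ) : ℝ := ∑' a, (p a).toReal * f a

lemma summable_toReal_pmf (p : PMF α) : Summable fun a => (p a).toReal :=
  ENNReal.summable_toReal p.tsum_coe_ne_top

lemma tsum_toReal_pmf (p : PMF α) : ∑' a, (p a).toReal = 1 := by
  rw [← ENNReal.tsum_toReal_eq p.apply_ne_top, p.tsum_coe, ENNReal.toReal_one]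

lemma norm_toReal_mul_le {y : ℝ} (t : ENNReal) (hy : |y| ≤ C) :
    ‖t.toReal * y‖ ≤ t.toReal * C := by
  rw [norm_mul, Real.norm_of_nonneg ENNReal.toReal_nonneg]
  exact mul_le_mul_of_nonneg_left hy ENNReal.toReal_nonneg

lemma summable_toReal_mul (p : PMF α) (hf : ∀ a, |f a| ≤ C) :
    Summable fun a => (p a).toReal * f a :=
  .of_norm_bounded ((summable_toReal_pmf p).mul_right C) fun a => norm_toReal_mul_le _ (hf a)

lemma expect_const (p : PMF α) (c : ℝ) : expect p (fun _ => c) = c := by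
  rw [expect, tsum_mul_right, tsum_toReal_pmf, one_mul]

lemma expect_add (p : PMF α) (hf : ∀ a, |f a| ≤ C) (hh : ∀ a, |h a| ≤ D) :
    expect p (fun a => f a + h a) = expect p f + expect p h := by
  simp only [expect, mul_add]
  exact (summable_toReal_mul p hf).tsum_add (summable_toReal_mul p hh)

lemma expect_const_mul (p : PMF α) (f : α → ℝ) (c : ℝ) :
    expect p (fun a => c * f a) = c * expect p f := by
  simp only [expect, ← tsum_mul_left, mul_left_comm]

lemma expect_neg (p : PMF α) (f : α → ℝ) : expect p (fun a => -f a) = -expect p f := by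
  simpa only [neg_one_mul] using expect_const_mul p f (-1)

lemma expect_mono (p : PMF α) (hf : ∀ a, |f a| ≤ C) (hh : ∀ a, |h a| ≤ D)
    (hfh : ∀ a, f a ≤ h a) : expect p f ≤ expect p h :=
  (summable_toReal_mul p hf).tsum_le_tsum
    (fun a => mul_le_mul_of_nonneg_left (hfh a) ENNReal.toReal_nonneg) (summable_toReal_mul p hh)

lemma expect_le_add (p : PMF α) (hf : ∀ a, |f a| ≤ C) (hh : ∀ a, |h a| ≤ D)
    (hfh : ∀ a, f a ≤ h a + e) : expect p f ≤ expect p h + e := by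
  have he : ∀ _ : α, |e| ≤ |e| := fun _ => le_rfl
  calc expect p f ≤ expect p (fun a => h a + e) :=
        expect_mono p hf (fun a => (abs_add_le _ _).trans (add_le_add (hh a) le_rfl)) hfh
    _ = expect p h + e := by rw [expect_add p hh he, expect_const]

lemma abs_expect_le (p : PMF α) (hf : ∀ a, |f a| ≤ C) : |expect p f| ≤ C := by
  calc |expect p f| ≤ ∑' a, (p a).toReal * C :=
        tsum_of_norm_bounded ((summable_toReal_pmf p).mul_right C).hasSum
          fun a => norm_toReal_mul_le _ (hf a)
    _ = C := expect_const p C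

lemma expect_pure (a : α) (f : α → ℝ) : expect (PMF.pure a) f = f a := by
  rw [expect, tsum_eq_single a fun b hb => by simp [PMF.pure_apply, hb]]
  simp

lemma expect_eq_sum [Fintype α] (p : PMF α) (f : α → ℝ) :
    expect p f = ∑ a, (p a).toReal * f a :=
  tsum_fintype _

lemma summable_toReal_mul_toReal_mul (p : PMF α) (q : α → PMF β) {F : α → β → ℝ}
    (hF : ∀ a b, |F a b| ≤ C) :
    Summable fun z : α × β => (p z.1).toReal * ((q z.1 z.2).toReal * F z.1 z.2) := by
  have joint_mass : ∑' z : α × β, p z.1 * q z.1 z.2 ≠ ⊤ := by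
    rw [ENNReal.tsum_prod (f := fun a b => p a * q a b)]
    simp [ENNReal.tsum_mul_left]
  refine .of_norm_bounded ((ENNReal.summable_toReal joint_mass).mul_right C) fun z => ?_
  rw [← mul_assoc, ← ENNReal.toReal_mul]
  exact norm_toReal_mul_le _ (hF z.1 z.2)

lemma expect_bind (p : PMF α) (q : α → PMF β) {f : β → ℝ} (hf : ∀ b, |f b| ≤ C) :
    expect (p.bind q) f = expect p fun a => expect (q a) f := by
  have bind_term (b : β) : (p.bind q b).toReal * f b =
      ∑' a, (p a).toReal * ((q a b).toReal * f b) := by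
    rw [PMF.bind_apply, ENNReal.tsum_toReal_eq fun a =>
      ENNReal.mul_ne_top (p.apply_ne_top a) ((q a).apply_ne_top b), ← tsum_mul_right]
    simp only [ENNReal.toReal_mul, mul_assoc]
  simp only [expect, bind_term, ← tsum_mul_left]
  exact (summable_toReal_mul_toReal_mul p q fun _ => hf).tsum_comm
    (f := fun a b => (p a).toReal * ((q a b).toReal * f b))

lemma expect_map (p : PMF α) (φ : α → β) {f : β → ℝ} (hf : ∀ b, |f b| ≤ C) :
    expect (p.map φ) f = expect p fun a => f (φ a) := by
  simp only [PMF.map, expect_bind p _ hf, Function.comp_apply, expect_pure]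

lemma expect_comm (p : PMF α) (q : PMF β) {F : α → β → ℝ} (hF : ∀ a b, |F a b| ≤ C) :
    (expect p fun a => expect q fun b => F a b) = expect q fun b => expect p fun a => F a b := by
  simp only [expect, ← tsum_mul_left]
  rw [← (summable_toReal_mul_toReal_mul p (fun _ => q) hF).tsum_comm
    (f := fun a b => (p a).toReal * ((q b).toReal * F a b))]
  simp only [mul_left_comm]

lemma expect_indicator_one (p : PMF α) (s : Set α) :
    expect p (s.indicator 1) = ∑' a : s, (p a).toReal := by
  rw [tsum_subtype s fun a => (p a).toReal, expect]
  refine tsum_congr fun a => ?_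
  by_cases ha : a ∈ s <;> simp [ha]

lemma expect_le_add_of_forall_mem (p : PMF α) (hf : ∀ a, |f a| ≤ C) (hh : ∀ a, |h a| ≤ D)
    (he : 0 ≤ e) {s : Set α} (hs : ∀ a ∈ s, f a ≤ h a + e) :
    expect p f ≤ expect p h + e + (C + D) * ∑' a : ↥sᶜ, (p a).toReal := by
  have indicator_bound (a : α) : |(C + D) * sᶜ.indicator 1 a| ≤ |C + D| := by
    by_cases ha : a ∈ s <;> simp [ha]
  have pointwise_bound (a : α) : f a ≤ h a + (C + D) * sᶜ.indicator 1 a + e := by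
    by_cases ha : a ∈ s
    · simpa [ha] using hs a ha
    · simp only [Set.mem_compl_iff, ha, not_false_eq_true, Set.indicator_of_mem, Pi.one_apply]
      linarith [(abs_le.1 (hf a)).2, (abs_le.1 (hh a)).1]
  calc expect p f ≤ expect p (fun a => h a + (C + D) * sᶜ.indicator 1 a) + e :=
        expect_le_add p hf
          (fun a => (abs_add_le _ _).trans (add_le_add (hh a) (indicator_bound a))) pointwise_bound
    _ = _ := by
        rw [expect_add p hh indicator_bound, expect_const_mul, expect_indicator_one]
        ring

lemma exists_finset_tsum_compl_lt (p : PMF α) (he : 0 < e) :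
    ∃ s : Finset α, ∑' a : ↥(s : Set α)ᶜ, (p a).toReal < e :=
  ((tendsto_tsum_compl_atTop_zero fun a => (p a).toReal).eventually_lt_const he).exists

end Expectation

section SaddlePoint

variable {α E F : Type*}

lemma continuousOn_expect [TopologicalSpace E] (p : PMF α) {f : E → α → ℝ} {C : ℝ} {s : Set E}
    (hf : ∀ a, ContinuousOn (fun x => f x a) s) (hC : ∀ x ∈ s, ∀ a, |f x a| ≤ C) :
    ContinuousOn (fun x => expect p (f x)) s :=
  continuousOn_tsum (fun a => (hf a).const_mul _) ((summable_toReal_pmf p).mul_right C)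
    fun a x hx => norm_toReal_mul_le _ (hC x hx a)

lemma expect_linearComb [AddCommGroup E] [Module ℝ E] (p : PMF α) (A : α → E →ₗ[ℝ] ℝ) {C : ℝ}
    {x y : E} (hx : ∀ i, |A i x| ≤ C) (hy : ∀ i, |A i y| ≤ C) (a b : ℝ) :
    (expect p fun i => A i (a • x + b • y)) =
      a • (expect p fun i => A i x) + b • expect p fun i => A i y := by
  have scaled_bound (c : ℝ) {z : E} (hz : ∀ i, |A i z| ≤ C) (i : α) :
      |c * A i z| ≤ |c| * C := by
    rw [abs_mul]
    exact mul_le_mul_of_nonneg_left (hz i) (abs_nonneg c)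
  simp only [map_add, map_smul, smul_eq_mul]
  rw [expect_add p (scaled_bound a hx) (scaled_bound b hy), expect_const_mul, expect_const_mul]

lemma exists_isSaddlePointOn_expect
    [TopologicalSpace E] [AddCommGroup E] [Module ℝ E] [IsTopologicalAddGroup E]
    [ContinuousSMul ℝ E] [TopologicalSpace F] [AddCommGroup F] [Module ℝ F]
    [IsTopologicalAddGroup F] [ContinuousSMul ℝ F] {X : Set E} {Y : Set F}
    (hX : X.Nonempty) (convexX : Convex ℝ X) (compactX : IsCompact X)
    (hY : Y.Nonempty) (convexY : Convex ℝ Y) (compactY : IsCompact Y)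
    (p : PMF α) (B : α → E →ₗ[ℝ] F →ₗ[ℝ] ℝ) (contX : ∀ a y, Continuous fun x => B a x y)
    (contY : ∀ a x, Continuous (B a x)) {C : ℝ} (hC : ∀ a, ∀ x ∈ X, ∀ y ∈ Y, |B a x y| ≤ C) :
    ∃ x ∈ X, ∃ y ∈ Y, IsSaddlePointOn X Y (fun x y => expect p fun a => B a x y) x y := by
  refine Sion.exists_isSaddlePointOn hX convexX compactX
    (fun y hy => (continuousOn_expect p (fun a => (contX a y).continuousOn)
      fun x hx a => hC a x hx y hy).lowerSemicontinuousOn)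
    (fun y hy => ConvexOn.quasiconvexOn ⟨convexX, fun x hx x' hx' a b _ _ _ => le_of_eq ?_⟩)
    convexY hY compactY
    (fun x hx => (continuousOn_expect p (fun a => (contY a x).continuousOn)
      fun y hy a => hC a x hx y hy).upperSemicontinuousOn)
    (fun x hx => ConcaveOn.quasiconcaveOn ⟨convexY, fun y hy y' hy' a b _ _ _ => ge_of_eq ?_⟩)
  · exact expect_linearComb p (fun i => (B i).flip y) (fun i => hC i x hx y hy)
      (fun i => hC i x' hx' y hy) a b
  · exact expect_linearComb p (fun i => B i x) (fun i => hC i x hx y hy)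
      (fun i => hC i x hx y' hy') a b

end SaddlePoint

section BayesianGame

variable {K : Type} {ι κ ι' κ' : Type*}

/-- The payoff matrices of a Bayesian game with action sets `ι` and `κ` lie in `[-1, 1]`. -/
def IsNormalized (M : K → ι → κ → ℝ) : Prop := ∀ k i j, |M k i j| ≤ 1

lemma IsPayoff.isNormalized {g : K → ℕ → ℕ → ℝ} (hg : IsPayoff g) : IsNormalized g := by
  obtain ⟨L, hg, -⟩ := hg
  exact fun k i j => abs_le.2 (hg k i j)

/-- The expected payoff of a Bayesian game with arbitrary action sets `ι` and `κ`; the game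
`Γ(u, g)` has `ι = κ = ℕ`. -/
noncomputable def bayesPayoff (u : InfoStruct K) (M : K → ι → κ → ℝ) (S : ℕ → PMF ι)
    (T : ℕ → PMF κ) : ℝ :=
  expect u fun x => expect (S x.2.1) fun i => expect (T x.2.2) fun j => M x.1 i j

lemma payoff_eq_bayesPayoff (u : InfoStruct K) (g : K → ℕ → ℕ → ℝ) (σ τ : Garbling) :
    payoff u g σ τ = bayesPayoff u g σ τ := by
  simp only [payoff, bayesPayoff, expect, ← tsum_mul_left, mul_assoc]

variable {u : InfoStruct K} {M M' : K → ι → κ → ℝ} {S : ℕ → PMF ι} {T : ℕ → PMF κ} {e : ℝ}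

lemma IsNormalized.abs_expect_right_le (hM : IsNormalized M) (q : PMF κ) (k : K) (i : ι) :
    |expect q fun j => M k i j| ≤ 1 :=
  abs_expect_le q fun j => hM k i j

lemma IsNormalized.abs_expect_expect_le (hM : IsNormalized M) (p : PMF ι) (q : PMF κ) (k : K) :
    |expect p fun i => expect q fun j => M k i j| ≤ 1 :=
  abs_expect_le p fun i => hM.abs_expect_right_le q k i

lemma abs_bayesPayoff_le (u : InfoStruct K) (hM : IsNormalized M) (S : ℕ → PMF ι)
    (T : ℕ → PMF κ) : |bayesPayoff u M S T| ≤ 1 :=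
  abs_expect_le u fun x => hM.abs_expect_expect_le _ _ x.1

lemma bayesPayoff_le_add (hM : IsNormalized M) (hM' : IsNormalized M')
    (h : ∀ k i j, M k i j ≤ M' k i j + e) :
    bayesPayoff u M S T ≤ bayesPayoff u M' S T + e :=
  expect_le_add u (fun x => hM.abs_expect_expect_le _ _ x.1)
    (fun x => hM'.abs_expect_expect_le _ _ x.1) fun x =>
    expect_le_add _ (hM.abs_expect_right_le _ x.1) (hM'.abs_expect_right_le _ x.1) fun i =>
      expect_le_add _ (hM x.1 i) (hM' x.1 i) (h x.1 i)

lemma bayesPayoff_mono (hM : IsNormalized M) (hM' : IsNormalized M')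
    (h : ∀ k i j, M k i j ≤ M' k i j) : bayesPayoff u M S T ≤ bayesPayoff u M' S T := by
  simpa only [add_zero] using
    bayesPayoff_le_add hM hM' (e := 0) fun k i j => (h k i j).trans_eq (add_zero _).symm

lemma bayesPayoff_map_left (hM : IsNormalized M) (φ : ι' → ι) (S : ℕ → PMF ι') :
    bayesPayoff u M (fun c => (S c).map φ) T = bayesPayoff u (fun k i => M k (φ i)) S T := by
  simp only [bayesPayoff, expect_map _ φ (hM.abs_expect_right_le _ _)]

lemma bayesPayoff_map_right (hM : IsNormalized M) (φ : κ' → κ) (T : ℕ → PMF κ') :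
    bayesPayoff u M S (fun d => (T d).map φ) = bayesPayoff u (fun k i j => M k i (φ j)) S T := by
  simp only [bayesPayoff, expect_map _ φ (hM _ _)]

/-- The game in which player 1 no longer chooses an action but announces a signal, the action
being then drawn according to the behavior strategy `σ`. -/
noncomputable def announcementGame (σ : ℕ → PMF ι) (M : K → ι → κ → ℝ) : K → ℕ → κ → ℝ :=
  fun k c j => expect (σ c) fun i => M k i j

protected lemma IsNormalized.announcementGame (hM : IsNormalized M) (σ : ℕ → PMF ι) :
    IsNormalized (announcementGame σ M) :=
  fun k c j => abs_expect_le (σ c) fun i => hM k i j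

lemma bayesPayoff_bind_left (hM : IsNormalized M) (q : Garbling) (σ : ℕ → PMF ι) :
    bayesPayoff u M (fun c => (q c).bind σ) T = bayesPayoff u (announcementGame σ M) q T := by
  simp only [bayesPayoff, expect_bind _ σ (hM.abs_expect_right_le _ _), announcementGame,
    expect_comm (σ _) _ (hM _)]

lemma bayesPayoff_announcementGame_pure (hM : IsNormalized M) (σ : ℕ → PMF ι) :
    bayesPayoff u (announcementGame σ M) PMF.pure T = bayesPayoff u M σ T := by
  simp only [← bayesPayoff_bind_left hM, PMF.pure_bind]

lemma bayesPayoff_pure_le_add {M M' : K → ℕ → κ → ℝ} (hM : IsNormalized M)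
    (hM' : IsNormalized M') (he : 0 ≤ e) {s : Set (K × ℕ × ℕ)}
    (h : ∀ x ∈ s, ∀ j, M x.1 x.2.1 j ≤ M' x.1 x.2.1 j + e) :
    bayesPayoff u M PMF.pure T ≤
      bayesPayoff u M' PMF.pure T + e + 2 * ∑' x : ↥sᶜ, (u x).toReal := by
  simp only [bayesPayoff, expect_pure, ← one_add_one_eq_two]
  exact expect_le_add_of_forall_mem u (fun x => hM.abs_expect_right_le _ _ _)
    (fun x => hM'.abs_expect_right_le _ _ _) he
    fun x hx => expect_le_add _ (hM _ _) (hM' _ _) (h x hx)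

/-- The information structure in which the players have exchanged their signals. -/
noncomputable def swapPlayers (u : InfoStruct K) : InfoStruct K :=
  u.map fun x => (x.1, x.2.2, x.2.1)

/-- The game in which the players have exchanged their roles. -/
def dualGame (M : K → ι → κ → ℝ) : K → κ → ι → ℝ := fun k j i => -M k i j

protected lemma IsNormalized.dualGame (hM : IsNormalized M) : IsNormalized (dualGame M) :=
  fun k j i => (abs_neg _).trans_le (hM k i j)

lemma dualGame_dualGame (M : K → ι → κ → ℝ) : dualGame (dualGame M) = M :=
  funext fun _ => funext fun _ => funext fun _ => neg_neg _

lemma bayesPayoff_swapPlayers_dualGame (u : InfoStruct K) (hM : IsNormalized M) (S : ℕ → PMF ι)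
    (T : ℕ → PMF κ) : bayesPayoff (swapPlayers u) (dualGame M) T S = -bayesPayoff u M S T := by
  have inner_bound (x : K × ℕ × ℕ) := hM.dualGame.abs_expect_expect_le (T x.2.1) (S x.2.2) x.1
  refine (expect_map u _ inner_bound).trans ?_
  simp only [bayesPayoff, dualGame, expect_neg, expect_comm (S _) (T _) (hM _)]

end BayesianGame

section Value

variable {K : Type} {g : K → ℕ → ℕ → ℝ} {u : InfoStruct K} {X : ℝ}

lemma abs_payoff_le (u : InfoStruct K) (hg : IsNormalized g) (σ τ : Garbling) :
    |payoff u g σ τ| ≤ 1 :=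
  payoff_eq_bayesPayoff u g σ τ ▸ abs_bayesPayoff_le u hg σ τ

lemma iInf_payoff_le (hg : IsNormalized g) (σ τ : Garbling) :
    ⨅ τ, payoff u g σ τ ≤ payoff u g σ τ :=
  ciInf_le ⟨-1, by rintro _ ⟨τ, rfl⟩; exact (abs_le.1 (abs_payoff_le u hg σ τ)).1⟩ τ

lemma le_val (hg : IsNormalized g) (σ : Garbling) (h : ∀ τ, X ≤ payoff u g σ τ) : X ≤ val u g := by
  have guarantees_bddAbove : BddAbove (Set.range fun σ => ⨅ τ, payoff u g σ τ) := by
    refine ⟨1, ?_⟩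
    rintro _ ⟨σ, rfl⟩
    exact (iInf_payoff_le hg σ PMF.pure).trans (abs_le.1 (abs_payoff_le u hg σ _)).2
  exact (le_ciInf h).trans (le_ciSup guarantees_bddAbove σ)

lemma val_le (h : ∀ σ, ⨅ τ, payoff u g σ τ ≤ X) : val u g ≤ X := ciSup_le h

lemma payoff_swapPlayers_dualGame (u : InfoStruct K) (hg : IsNormalized g) (σ τ : Garbling) :
    payoff (swapPlayers u) (dualGame g) τ σ = -payoff u g σ τ := by
  simp only [payoff_eq_bayesPayoff, bayesPayoff_swapPlayers_dualGame u hg]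

lemma abs_val_le (u : InfoStruct K) (hg : IsNormalized g) : |val u g| ≤ 1 :=
  abs_le.2 ⟨le_val hg PMF.pure fun τ => (abs_le.1 (abs_payoff_le u hg _ τ)).1,
    val_le fun σ => (iInf_payoff_le hg σ PMF.pure).trans (abs_le.1 (abs_payoff_le u hg σ _)).2⟩

end Value

section Minimax

variable {K : Type} {ι κ : Type*}

lemma sum_toReal_pmf [Fintype ι] (p : PMF ι) : ∑ i, (p i).toReal = 1 := by
  rw [← tsum_toReal_pmf p, tsum_fintype]

lemma toReal_pmf_mem_stdSimplex [Fintype ι] (p : PMF ι) :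
    (fun i => (p i).toReal) ∈ stdSimplex ℝ ι :=
  ⟨fun _ => ENNReal.toReal_nonneg, sum_toReal_pmf p⟩

lemma exists_pmf_toReal_eq [Fintype ι] {w : ι → ℝ} (hw : w ∈ stdSimplex ℝ ι) :
    ∃ p : PMF ι, (fun i => (p i).toReal) = w := by
  have mass_one : ∑ i, ENNReal.ofReal (w i) = 1 := by
    rw [← ENNReal.ofReal_sum_of_nonneg fun i _ => hw.1 i, hw.2, ENNReal.ofReal_one]
  exact ⟨PMF.ofFintype _ mass_one, funext fun i => ENNReal.toReal_ofReal (hw.1 i)⟩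

/-- The set of behavior strategies with finite action set `ι`, seen in the space of maps from
signals to weight vectors on `ι`. -/
def behaviorStrategies (ι : Type*) [Fintype ι] : Set (ℕ → ι → ℝ) :=
  Set.univ.pi fun _ => stdSimplex ℝ ι

lemma nonempty_behaviorStrategies (ι : Type*) [Fintype ι] [Nonempty ι] :
    (behaviorStrategies ι).Nonempty :=
  Set.univ_pi_nonempty_iff.2 fun _ => Set.nonempty_coe_sort.1 inferInstance

lemma convex_behaviorStrategies (ι : Type*) [Fintype ι] : Convex ℝ (behaviorStrategies ι) :=
  convex_pi fun _ _ => convex_stdSimplex ℝ ι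

lemma isCompact_behaviorStrategies (ι : Type*) [Fintype ι] : IsCompact (behaviorStrategies ι) :=
  isCompact_univ_pi fun _ => isCompact_stdSimplex ℝ ι

lemma toReal_mem_behaviorStrategies [Fintype ι] (S : ℕ → PMF ι) :
    (fun c i => (S c i).toReal) ∈ behaviorStrategies ι :=
  fun c _ => toReal_pmf_mem_stdSimplex (S c)

lemma exists_toReal_eq_of_mem_behaviorStrategies [Fintype ι] {s : ℕ → ι → ℝ}
    (hs : s ∈ behaviorStrategies ι) : ∃ S : ℕ → PMF ι, (fun c i => (S c i).toReal) = s := by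
  choose S hS using fun c => exists_pmf_toReal_eq (hs c (Set.mem_univ c))
  exact ⟨S, funext hS⟩

/-- The payoff at `x = (k, c, d)` as a bilinear form in the weights `t` of player 2, the
minimizer, and `s` of player 1. -/
noncomputable def bilinPayoff [Fintype ι] [Fintype κ] (M : K → ι → κ → ℝ) (x : K × ℕ × ℕ) :
    (ℕ → κ → ℝ) →ₗ[ℝ] (ℕ → ι → ℝ) →ₗ[ℝ] ℝ :=
  LinearMap.mk₂ ℝ (fun t s => s x.2.1 ⬝ᵥ Matrix.mulVec (.of (M x.1)) (t x.2.2))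
    (fun _ _ _ => by simp [Matrix.mulVec_add]) (fun _ _ _ => by simp [Matrix.mulVec_smul])
    (fun _ _ _ => by simp) (fun _ _ _ => by simp)

lemma bilinPayoff_toReal [Fintype ι] [Fintype κ] (M : K → ι → κ → ℝ) (x : K × ℕ × ℕ)
    (S : ℕ → PMF ι) (T : ℕ → PMF κ) :
    bilinPayoff M x (fun d j => (T d j).toReal) (fun c i => (S c i).toReal) =
      expect (S x.2.1) fun i => expect (T x.2.2) fun j => M x.1 i j := by
  simp only [bilinPayoff, LinearMap.mk₂_apply, dotProduct, Matrix.mulVec, Matrix.of_apply,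
    expect_eq_sum, mul_comm]

lemma continuous_bilinPayoff_left [Fintype ι] [Fintype κ] (M : K → ι → κ → ℝ) (x : K × ℕ × ℕ)
    (s : ℕ → ι → ℝ) : Continuous fun t => bilinPayoff M x t s := by
  simp only [bilinPayoff, LinearMap.mk₂_apply]
  fun_prop

lemma continuous_bilinPayoff_right [Fintype ι] [Fintype κ] (M : K → ι → κ → ℝ) (x : K × ℕ × ℕ)
    (t : ℕ → κ → ℝ) : Continuous fun s => bilinPayoff M x t s := by
  simp only [bilinPayoff, LinearMap.mk₂_apply]
  fun_prop

lemma IsNormalized.abs_bilinPayoff_le [Fintype ι] [Fintype κ] {M : K → ι → κ → ℝ}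
    (hM : IsNormalized M) (x : K × ℕ × ℕ) {t : ℕ → κ → ℝ} (ht : t ∈ behaviorStrategies κ)
    {s : ℕ → ι → ℝ} (hs : s ∈ behaviorStrategies ι) : |bilinPayoff M x t s| ≤ 1 := by
  obtain ⟨T, rfl⟩ := exists_toReal_eq_of_mem_behaviorStrategies ht
  obtain ⟨S, rfl⟩ := exists_toReal_eq_of_mem_behaviorStrategies hs
  exact bilinPayoff_toReal M x S T ▸ hM.abs_expect_expect_le _ _ x.1

lemma exists_optimal_strategies [Finite ι] [Finite κ] [Nonempty ι] [Nonempty κ]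
    (u : InfoStruct K) {M : K → ι → κ → ℝ} (hM : IsNormalized M) :
    ∃ (S₀ : ℕ → PMF ι) (T₀ : ℕ → PMF κ), ∀ S T,
      bayesPayoff u M S T₀ ≤ bayesPayoff u M S₀ T := by
  cases nonempty_fintype ι
  cases nonempty_fintype κ
  obtain ⟨t, ht, s, hs, saddle⟩ := exists_isSaddlePointOn_expect
    (nonempty_behaviorStrategies κ) (convex_behaviorStrategies κ) (isCompact_behaviorStrategies κ)
    (nonempty_behaviorStrategies ι) (convex_behaviorStrategies ι) (isCompact_behaviorStrategies ι)
    u (bilinPayoff M) (continuous_bilinPayoff_left M) (continuous_bilinPayoff_right M)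
    fun x _ ht _ hs => hM.abs_bilinPayoff_le x ht hs
  obtain ⟨T₀, rfl⟩ := exists_toReal_eq_of_mem_behaviorStrategies ht
  obtain ⟨S₀, rfl⟩ := exists_toReal_eq_of_mem_behaviorStrategies hs
  refine ⟨S₀, T₀, fun S T => ?_⟩
  simpa only [bayesPayoff, bilinPayoff_toReal] using
    saddle _ (toReal_mem_behaviorStrategies T) _ (toReal_mem_behaviorStrategies S)

variable {L : ℕ} {g : K → ℕ → ℕ → ℝ} {u : InfoStruct K}

/-- Replaces the actions `≥ L`, which are dominated for both players in a payoff function with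
action bound `L`, by the action `0`; the target is `Fin (L + 1)` so as to be nonempty. -/
def clampAction (L i : ℕ) : Fin (L + 1) := if i < L then Fin.ofNat (L + 1) i else 0

lemma val_clampAction_of_lt {i : ℕ} (hi : i < L) : (clampAction L i : ℕ) = i := by
  simp [clampAction, hi, Nat.mod_eq_of_lt (hi.trans L.lt_succ_self)]

lemma IsPayoffL.le_clampAction_left (hg : IsPayoffL L g) (k : K) (i j : ℕ) :
    g k i j ≤ g k (clampAction L i) j := by
  rcases lt_or_ge i L with hi | hi
  · rw [val_clampAction_of_lt hi]
  · exact (hg.2.1 k i j hi).trans_le (hg.1 _ _ _).1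

lemma IsPayoffL.clampAction_right_le (hg : IsPayoffL L g) (k : K) (i j : ℕ) :
    g k i (clampAction L j) ≤ g k i j := by
  rcases lt_or_ge j L with hj | hj
  · rw [val_clampAction_of_lt hj]
  rcases lt_or_ge i L with hi | hi
  · exact (hg.1 _ _ _).2.trans_eq (hg.2.2 k i j hi hj).symm
  · rw [hg.2.1 k i _ hi, hg.2.1 k i _ hi]

lemma exists_optimal_garblings (u : InfoStruct K) (hg : IsPayoff g) :
    ∃ σ₀ τ₀ : Garbling, ∀ σ τ, payoff u g σ τ₀ ≤ payoff u g σ₀ τ := by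
  have hgn := hg.isNormalized
  obtain ⟨L, hL⟩ := hg
  let M : K → Fin (L + 1) → Fin (L + 1) → ℝ := fun k i j => g k i j
  have hM : IsNormalized M := fun k i j => hgn k i j
  obtain ⟨S₀, T₀, optimal⟩ := exists_optimal_strategies u hM
  refine ⟨fun c => (S₀ c).map (↑), fun d => (T₀ d).map (↑), fun σ τ => ?_⟩
  simp only [payoff_eq_bayesPayoff]
  calc bayesPayoff u g σ (fun d => (T₀ d).map (↑))
      = bayesPayoff u (fun k i (j : Fin (L + 1)) => g k i j) σ T₀ := bayesPayoff_map_right hgn _ _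
    _ ≤ bayesPayoff u (fun k i (j : Fin (L + 1)) => g k (clampAction L i) j) σ T₀ :=
        bayesPayoff_mono (fun k i j => hgn k i j) (fun k i j => hgn k _ j)
          fun k i j => hL.le_clampAction_left k i j
    _ = bayesPayoff u M (fun c => (σ c).map (clampAction L)) T₀ :=
        (bayesPayoff_map_left hM _ _).symm
    _ ≤ bayesPayoff u M S₀ (fun d => (τ d).map (clampAction L)) := optimal _ _
    _ = bayesPayoff u (fun k (i : Fin (L + 1)) j => g k i (clampAction L j)) S₀ τ :=
        bayesPayoff_map_right hM _ _
    _ ≤ bayesPayoff u (fun k (i : Fin (L + 1)) j => g k i j) S₀ τ :=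
        bayesPayoff_mono (fun k i j => hgn k i _) (fun k i j => hgn k i j)
          fun k i j => hL.clampAction_right_le k i j
    _ = bayesPayoff u g (fun c => (S₀ c).map (↑)) τ := (bayesPayoff_map_left hgn _ _).symm

/-- This is the minimax theorem, the left-hand side being the opposite of `inf sup`. -/
lemma val_swapPlayers_dualGame (u : InfoStruct K) (hg : IsPayoff g) :
    val (swapPlayers u) (dualGame g) = -val u g := by
  have hgn := hg.isNormalized
  obtain ⟨σ₀, τ₀, optimal⟩ := exists_optimal_garblings u hg
  apply le_antisymm
  · refine val_le fun τ => le_neg.1 (val_le fun σ => le_neg.1 ?_)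
    calc ⨅ σ, payoff (swapPlayers u) (dualGame g) τ σ
        ≤ payoff (swapPlayers u) (dualGame g) τ σ := iInf_payoff_le hgn.dualGame τ σ
      _ = -payoff u g σ τ := payoff_swapPlayers_dualGame u hgn σ τ
      _ ≤ -⨅ τ, payoff u g σ τ := neg_le_neg (iInf_payoff_le hgn σ τ)
  · refine le_val hgn.dualGame τ₀ fun σ => ?_
    rw [payoff_swapPlayers_dualGame u hgn, neg_le_neg_iff]
    exact le_val hgn σ₀ (optimal σ)

end Minimax

section Quantization

variable {V I J : Type*} [PseudoMetricSpace V] {e : ℝ}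

lemma exists_finite_net [CompactSpace V] [Nonempty V] (he : 0 < e) (n : ℕ) :
    ∃ N ≥ n, ∃ (r : Fin N → V) (q : V → Fin N), ∀ v, dist (r (q v)) v ≤ e := by
  have dense_cover : (Set.univ : Set V) ⊆ ⋃ m, Metric.ball (TopologicalSpace.denseSeq V m) e :=
    fun v _ => Set.mem_iUnion.2 <|
      ((TopologicalSpace.denseRange_denseSeq V).exists_dist_lt v he).imp fun _ hm => hm
  obtain ⟨t, ht⟩ := isCompact_univ.elim_finite_subcover _ (fun _ => Metric.isOpen_ball) dense_cover
  have exists_near (v : V) :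
      ∃ m : Fin (max n (t.sup id + 1)), dist (TopologicalSpace.denseSeq V m) v ≤ e := by
    obtain ⟨m, hm, hv⟩ := Set.mem_iUnion₂.1 (ht (Set.mem_univ v))
    exact ⟨⟨m, lt_max_of_lt_right (Nat.lt_succ_of_le (Finset.le_sup (f := id) hm))⟩,
      (Metric.mem_ball'.1 hv).le⟩
  choose q hq using exists_near
  exact ⟨_, le_max_left _ _, fun m => TopologicalSpace.denseSeq V m, q, hq⟩

lemma exists_quantization [Nonempty J] {r : I → V} {q : V → I} (hr : ∀ v, dist (r (q v)) v ≤ e)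
    (w : J → V) : ∃ (b : I → I) (χ : J → I) (ψ : I → J),
      (∀ j, dist (r (b (χ j))) (w j) ≤ e) ∧ ∀ m, dist (r (b m)) (w (ψ m)) ≤ e := by
  let ψ := Function.invFun (q ∘ w)
  refine ⟨q ∘ w ∘ ψ, q ∘ w, ψ, fun j => ?_, fun m => hr _⟩
  have same_cell : q (w (ψ (q (w j)))) = q (w j) := Function.invFun_eq (f := q ∘ w) ⟨j, rfl⟩
  simpa only [Function.comp_apply, same_cell] using hr (w j)

end Quantization

section TestGames

variable {K : Type} {N : ℕ} {c e : ℝ} {u v : InfoStruct K} {g G : K → ℕ → ℕ → ℝ}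

/-- The game on `ℕ × ℕ` that extends a game with `N` actions per player by making every action
`≥ N` disastrous for the player who takes it alone; `c` is the payoff when both players do. For
`c = -1` this is a payoff function, and `c = 1` is the dual convention. -/
def pad (c : ℝ) (M : K → Fin N → Fin N → ℝ) : K → ℕ → ℕ → ℝ := fun k i j =>
  if hi : i < N then if hj : j < N then M k ⟨i, hi⟩ ⟨j, hj⟩ else 1
  else if j < N then -1 else c

protected lemma IsNormalized.pad {M : K → Fin N → Fin N → ℝ} (hM : IsNormalized M) (hc : |c| ≤ 1) :
    IsNormalized (pad c M) := by
  intro k i j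
  unfold pad
  split_ifs <;> first | exact hM _ _ _ | exact hc | simp

lemma IsNormalized.isPayoff_pad {M : K → Fin N → Fin N → ℝ} (hM : IsNormalized M) :
    IsPayoff (pad (-1) M) := by
  refine ⟨N, fun k i j => abs_le.1 (hM.pad (by simp) k i j), fun k i j hi => ?_,
    fun k i j hi hj => ?_⟩
  · simp [pad, hi.not_gt]
  · simp [pad, hi, hj.not_gt]

lemma dualGame_pad (c : ℝ) (M : K → Fin N → Fin N → ℝ) :
    dualGame (pad c M) = pad (-c) (dualGame M) := by
  funext k j i
  unfold dualGame pad
  split_ifs <;> simp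

lemma iInf_payoff_le_val_add (hg : IsNormalized g) (hG : IsNormalized G) (he : 0 ≤ e)
    (σ : Garbling) (ψ : ℕ → ℕ) {s : Set (K × ℕ × ℕ)}
    (h : ∀ x ∈ s, ∀ j, announcementGame σ g x.1 x.2.1 (ψ j) ≤ G x.1 x.2.1 j + e) :
    ⨅ τ, payoff u g σ τ ≤ val u G + e + 2 * ∑' x : ↥sᶜ, (u x).toReal := by
  have hA := hg.announcementGame σ
  rw [add_assoc, ← sub_le_iff_le_add]
  refine le_val hG PMF.pure fun τ => ?_
  rw [sub_le_iff_le_add, ← add_assoc]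
  calc ⨅ τ, payoff u g σ τ ≤ payoff u g σ (fun d => (τ d).map ψ) := iInf_payoff_le hg σ _
    _ = bayesPayoff u (announcementGame σ g) PMF.pure (fun d => (τ d).map ψ) := by
        rw [payoff_eq_bayesPayoff, bayesPayoff_announcementGame_pure hg]
    _ = bayesPayoff u (fun k i j => announcementGame σ g k i (ψ j)) PMF.pure τ :=
        bayesPayoff_map_right hA ψ τ
    _ ≤ bayesPayoff u G PMF.pure τ + e + 2 * ∑' x : ↥sᶜ, (u x).toReal :=
        bayesPayoff_pure_le_add (fun k i j => hA k i _) hG he h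
    _ = payoff u G PMF.pure τ + e + 2 * ∑' x : ↥sᶜ, (u x).toReal := by
        rw [payoff_eq_bayesPayoff]

lemma val_le_val_add (hg : IsNormalized g) (hG : IsNormalized G) (σ : Garbling) (χ : ℕ → ℕ)
    (h : ∀ k i j, G k i (χ j) ≤ announcementGame σ g k i j + e) : val v G ≤ val v g + e := by
  refine val_le fun q => sub_le_iff_le_add.1 (le_val hg (fun c => (q c).bind σ) fun τ => ?_)
  rw [sub_le_iff_le_add]
  calc ⨅ τ, payoff v G q τ ≤ payoff v G q (fun d => (τ d).map χ) := iInf_payoff_le hG q _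
    _ = bayesPayoff v (fun k i j => G k i (χ j)) q τ := by
        rw [payoff_eq_bayesPayoff, bayesPayoff_map_right hG]
    _ ≤ bayesPayoff v (announcementGame σ g) q τ + e :=
        bayesPayoff_le_add (fun k i j => hG k i _) (hg.announcementGame σ) h
    _ = payoff v g (fun c => (q c).bind σ) τ + e := by
        rw [payoff_eq_bayesPayoff, bayesPayoff_bind_left hg]

open Classical in
/-- The game whose `j`-th column, restricted to the pairs `(k, i) ∈ P`, is `H j`; outside `P`
player 1 gets the worst payoff. -/
noncomputable def columnGame (P : Finset (K × ℕ)) (H : Fin N → P → Set.Icc (-1 : ℝ) 1) :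
    K → Fin N → Fin N → ℝ :=
  fun k i j => if h : (k, (i : ℕ)) ∈ P then H j ⟨_, h⟩ else -1

lemma isNormalized_columnGame (P : Finset (K × ℕ)) (H : Fin N → P → Set.Icc (-1 : ℝ) 1) :
    IsNormalized (columnGame P H) := by
  intro k i j
  unfold columnGame
  split_ifs
  · exact abs_le.2 (H j _).2
  · simp

lemma pad_columnGame_of_mem {P : Finset (K × ℕ)} {H : Fin N → P → Set.Icc (-1 : ℝ) 1} {k : K}
    {i j : ℕ} (hP : (k, i) ∈ P) (hi : i < N) (hj : j < N) :
    pad c (columnGame P H) k i j = H ⟨j, hj⟩ ⟨(k, i), hP⟩ := by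
  simp only [pad, columnGame, hi, hj, hP, dite_true]

lemma pad_columnGame_of_notMem {P : Finset (K × ℕ)} {H : Fin N → P → Set.Icc (-1 : ℝ) 1} {k : K}
    {i j : ℕ} (hP : (k, i) ∉ P) (hj : j < N) : pad c (columnGame P H) k i j = -1 := by
  by_cases hi : i < N
  · simp only [pad, columnGame, hi, hj, hP, dite_true, dite_false]
  · simp only [pad, hi, hj, dite_false, if_true]

lemma exists_columnGame_approx {A : K → ℕ → ℕ → ℝ} (hA : IsNormalized A) {P : Finset (K × ℕ)}
    (hP : ∀ x ∈ P, x.2 < N) {r : Fin N → P → Set.Icc (-1 : ℝ) 1}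
    {q : (P → Set.Icc (-1 : ℝ) 1) → Fin N} (hr : ∀ w, dist (r (q w)) w ≤ e) (c : ℝ) :
    ∃ (b : Fin N → Fin N) (χ ψ : ℕ → ℕ),
      (∀ x ∈ P, ∀ j, A x.1 x.2 (ψ j) ≤ pad c (columnGame P (r ∘ b)) x.1 x.2 j + e) ∧
      ∀ k i j, pad c (columnGame P (r ∘ b)) k i (χ j) ≤ A k i j + e := by
  have he : 0 ≤ e := dist_nonneg.trans (hr fun _ => ⟨0, by simp⟩)
  obtain ⟨b, χ, ψ, hχ, hψ⟩ := exists_quantization hr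
    fun (j : ℕ) (x : P) => (⟨A x.1.1 x.1.2 j, abs_le.1 (hA _ _ _)⟩ : Set.Icc (-1 : ℝ) 1)
  refine ⟨b, fun j => χ j, fun j => if hj : j < N then ψ ⟨j, hj⟩ else 0, fun x hx j => ?_,
    fun k i j => ?_⟩
  · by_cases hj : j < N
    · have close : |((r ∘ b) ⟨j, hj⟩ ⟨x, hx⟩ : ℝ) - A x.1 x.2 (ψ ⟨j, hj⟩)| ≤ e :=
        (dist_le_pi_dist _ _ (⟨x, hx⟩ : P)).trans (hψ ⟨j, hj⟩)
      simp only [pad_columnGame_of_mem hx (hP x hx) hj, dif_pos hj]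
      linarith [(abs_le.1 close).1]
    · simp only [pad, hP x hx, hj, dite_true, dite_false]
      linarith [(abs_le.1 (hA x.1 x.2 0)).2]
  · by_cases hx : (k, i) ∈ P
    · have close : |((r ∘ b) (χ j) ⟨(k, i), hx⟩ : ℝ) - A k i j| ≤ e :=
        (dist_le_pi_dist _ _ (⟨(k, i), hx⟩ : P)).trans (hχ j)
      rw [pad_columnGame_of_mem hx (hP _ hx) (χ j).2]
      linarith [(abs_le.1 close).2]
    · rw [pad_columnGame_of_notMem hx (χ j).2]
      linarith [(abs_le.1 (hA k i j)).1]

lemma exists_finite_testGames (u : InfoStruct K) (hc : |c| ≤ 1) (he : 0 < e) :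
    ∃ (N : ℕ) (𝓜 : Set (K → Fin N → Fin N → ℝ)), 𝓜.Finite ∧ (∀ M ∈ 𝓜, IsNormalized M) ∧
      ∀ (v : InfoStruct K) (g : K → ℕ → ℕ → ℝ), IsNormalized g →
        (∀ M ∈ 𝓜, val u (pad c M) ≤ val v (pad c M) + e) → val u g ≤ val v g + 5 * e := by
  classical
  have : Nonempty (Set.Icc (-1 : ℝ) 1) := ⟨0, by simp⟩
  obtain ⟨F, hF⟩ := exists_finset_tsum_compl_lt u he
  let P : Finset (K × ℕ) := F.image fun x => (x.1, x.2.1)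
  obtain ⟨N, hN, r, q, hr⟩ :=
    exists_finite_net (V := P → Set.Icc (-1 : ℝ) 1) he (P.sup Prod.snd + 1)
  have hP (x : K × ℕ) (hx : x ∈ P) : x.2 < N :=
    (Nat.lt_succ_of_le (Finset.le_sup (f := Prod.snd) hx)).trans_le hN
  refine ⟨N, Set.range fun b => columnGame P (r ∘ b), Set.finite_range _, ?_,
    fun v g hg h => val_le fun σ => ?_⟩
  · rintro _ ⟨b, rfl⟩
    exact isNormalized_columnGame P _
  obtain ⟨b, χ, ψ, hψ, hχ⟩ := exists_columnGame_approx (hg.announcementGame σ) hP hr c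
  have hG := (isNormalized_columnGame P (r ∘ b)).pad hc
  have mem_P (x : K × ℕ × ℕ) (hx : x ∈ (F : Set (K × ℕ × ℕ))) : (x.1, x.2.1) ∈ P :=
    Finset.mem_image_of_mem (fun x : K × ℕ × ℕ => (x.1, x.2.1)) hx
  calc ⨅ τ, payoff u g σ τ
      ≤ val u (pad c (columnGame P (r ∘ b))) + e +
          2 * ∑' x : ↥(F : Set (K × ℕ × ℕ))ᶜ, (u x).toReal :=
        iInf_payoff_le_val_add hg hG he.le σ ψ fun x hx => hψ _ (mem_P x hx)
    _ ≤ (val v (pad c (columnGame P (r ∘ b))) + e) + e + 2 * e := by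
        gcongr
        exact h _ ⟨b, rfl⟩
    _ ≤ (val v g + e + e) + e + 2 * e := by
        gcongr
        exact val_le_val_add hg hG σ χ hχ
    _ = val v g + 5 * e := by ring

end TestGames

section Convergence

variable {K : Type} {ι : Type*} {l : Filter ι} {u : ι → InfoStruct K} {v : InfoStruct K} {e : ℝ}

lemma eventually_val_le_val_add {c : ℝ} (hc : |c| ≤ 1)
    (h : ∀ (N : ℕ) (M : K → Fin N → Fin N → ℝ), IsNormalized M →
      Tendsto (fun n => val (u n) (pad c M)) l (𝓝 (val v (pad c M)))) (he : 0 < e) :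
    ∀ᶠ n in l, ∀ g : K → ℕ → ℕ → ℝ, IsNormalized g → val v g ≤ val (u n) g + 5 * e := by
  obtain ⟨N, 𝓜, finite_𝓜, normalized_𝓜, test⟩ := exists_finite_testGames v hc he
  have close_on_tests : ∀ᶠ n in l, ∀ M ∈ 𝓜, val v (pad c M) < val (u n) (pad c M) + e :=
    (Filter.eventually_all_finite finite_𝓜).2 fun M hM =>
      ((h N M (normalized_𝓜 M hM)).add_const e).eventually_const_lt (lt_add_of_pos_right _ he)
  filter_upwards [close_on_tests] with n hn g hg
  exact test (u n) g hg fun M hM => (hn M hM).le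

lemma eventually_abs_val_sub_val_le
    (h : ∀ g : K → ℕ → ℕ → ℝ, IsPayoff g → Tendsto (fun n => val (u n) g) l (𝓝 (val v g)))
    (he : 0 < e) :
    ∀ᶠ n in l, ∀ g : K → ℕ → ℕ → ℝ, IsPayoff g → |val (u n) g - val v g| ≤ 5 * e := by
  have swapped_val (w : InfoStruct K) {N : ℕ} {M : K → Fin N → Fin N → ℝ} (hM : IsNormalized M) :
      val (swapPlayers w) (pad 1 M) = -val w (pad (-1) (dualGame M)) := by
    rw [← val_swapPlayers_dualGame w hM.dualGame.isPayoff_pad, dualGame_pad, dualGame_dualGame,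
      neg_neg]
  have lower : ∀ᶠ n in l, ∀ g : K → ℕ → ℕ → ℝ, IsNormalized g → val v g ≤ val (u n) g + 5 * e :=
    eventually_val_le_val_add (c := -1) (by simp) (fun N M hM => h _ hM.isPayoff_pad) he
  have upper : ∀ᶠ n in l, ∀ g : K → ℕ → ℕ → ℝ, IsNormalized g →
      val (swapPlayers v) g ≤ val (swapPlayers (u n)) g + 5 * e :=
    eventually_val_le_val_add (c := 1) (by simp) (fun N M hM => by
      simpa only [swapped_val _ hM] using (h _ hM.dualGame.isPayoff_pad).neg) he
  filter_upwards [lower, upper] with n hlower hupper g hg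
  have hdual := hupper _ hg.isNormalized.dualGame
  rw [val_swapPlayers_dualGame v hg, val_swapPlayers_dualGame (u n) hg] at hdual
  rw [abs_le]
  constructor <;> linarith [hlower g hg.isNormalized]

lemma abs_val_sub_val_le_dVal (u v : InfoStruct K) {g : K → ℕ → ℕ → ℝ} (hg : IsPayoff g) :
    |val u g - val v g| ≤ dVal u v := by
  refine le_ciSup (f := fun g : {g : K → ℕ → ℕ → ℝ // IsPayoff g} => |val u g.1 - val v g.1|)
    ⟨1 + 1, ?_⟩ ⟨g, hg⟩
  rintro _ ⟨⟨g, hg⟩, rfl⟩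
  exact (abs_sub _ _).trans
    (add_le_add (abs_val_le u hg.isNormalized) (abs_val_le v hg.isNormalized))

lemma dVal_nonneg (u v : InfoStruct K) : 0 ≤ dVal u v := Real.iSup_nonneg fun _ => abs_nonneg _

theorem pointwise_iff_value_dist_general (u : ι → InfoStruct K) (ulim : InfoStruct K) :
    (∀ g : K → ℕ → ℕ → ℝ, IsPayoff g → Tendsto (fun n => val (u n) g) l (𝓝 (val ulim g))) ↔
      Tendsto (fun n => dVal (u n) ulim) l (𝓝 0) := by
  constructor
  · intro h
    refine Metric.tendsto_nhds.2 fun e he => ?_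
    filter_upwards [eventually_abs_val_sub_val_le h (e := e / 10) (by positivity)] with n hn
    rw [Real.dist_0_eq_abs, abs_of_nonneg (dVal_nonneg _ _)]
    calc dVal (u n) ulim ≤ 5 * (e / 10) :=
          Real.iSup_le (fun g => hn g.1 g.2) (by positivity)
      _ < e := by linarith
  · intro h g hg
    exact tendsto_iff_dist_tendsto_zero.2
      (squeeze_zero (fun _ => dist_nonneg) (fun _ => abs_val_sub_val_le_dVal _ _ hg) h)

end Convergence

/-- Pointwise convergence of values over all payoff functions is equivalent
to convergence in the value-based distance. -/
theorem pointwise_iff_value_dist (K : Type) [Fintype K]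
    (hK : 2 ≤ Fintype.card K) (u : ℕ → InfoStruct K) (ulim : InfoStruct K) :
    (∀ g : K → ℕ → ℕ → ℝ, IsPayoff g →
        Filter.Tendsto (fun n => val (u n) g) Filter.atTop (nhds (val ulim g)))
      ↔ Filter.Tendsto (fun n => dVal (u n) ulim) Filter.atTop (nhds 0) :=
  pointwise_iff_value_dist_general u ulim

end ValueDistance
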